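/- Exponential moment bound for the PAC-Bayes proof: for any λ > 0, any prior probability measure P on H, and any distribution D on Z, E_{Z_n ∼ D^n}[ E_{h∼P}[ exp( λ·(R̂_n(h) − R(h)) − λ²/(8n) ) ] ] ≤ 1, where Z_n = (z₁,…,z_n) are n i.i.d. samples from D. -/

import Mathlib

open MeasureTheory ENNReal

/-! For a fixed hypothesis, independence makes the centred empirical mean of `n` samples
sub-Gaussian with variance proxy `1/n` times that of a single centred loss, so the exponential
moment with its quadratic correction is at most `1`. The bound is uniform in the hypothesis, and
the prior does not depend on the sample, so Tonelli carries it through the average over the prior.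
For losses in `[0, 1]`, Hoeffding's lemma gives the variance proxy `1/4`. -/

open ProbabilityTheory
open scoped NNReal

section Subgaussian

variable {Ω H Z ι : Type*} [MeasurableSpace Ω] [MeasurableSpace H] [MeasurableSpace Z] [Fintype ι]
  {μ : Measure Ω} {c : ℝ≥0}

lemma integral_exp_mul_sub_le_one_of_hasSubgaussianMGF {X : Ω → ℝ}
    (hX : HasSubgaussianMGF X c μ) (t : ℝ) :
    ∫ ω, Real.exp (t * X ω - c * t ^ 2 / 2) ∂μ ≤ 1 := by
  simp only [Real.exp_sub, integral_div]
  exact div_le_one_of_le₀ (hX.mgf_le t) (Real.exp_pos _).le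

lemma integral_integral_exp_mul_sub_le_one_of_hasSubgaussianMGF [SFinite μ] {P : Measure H}
    [IsProbabilityMeasure P] {X : Ω → H → ℝ}
    (hXmeas : AEStronglyMeasurable (Function.uncurry X) (μ.prod P))
    (hX : ∀ᵐ h ∂P, HasSubgaussianMGF (fun ω ↦ X ω h) c μ) (t : ℝ) :
    ∫ ω, ∫ h, Real.exp (t * X ω h - c * t ^ 2 / 2) ∂P ∂μ ≤ 1 := by
  have hmeas : AEStronglyMeasurable
      (fun p : Ω × H ↦ Real.exp (t * X p.1 p.2 - c * t ^ 2 / 2)) (μ.prod P) :=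
    Real.continuous_exp.comp_aestronglyMeasurable
      ((hXmeas.const_mul t).sub aestronglyMeasurable_const)
  have hbound : ∀ᵐ h ∂P, ∫ ω, Real.exp (t * X ω h - c * t ^ 2 / 2) ∂μ ≤ 1 :=
    hX.mono fun h hh ↦ integral_exp_mul_sub_le_one_of_hasSubgaussianMGF hh t
  have hint : Integrable (fun p : Ω × H ↦ Real.exp (t * X p.1 p.2 - c * t ^ 2 / 2))
      (μ.prod P) := by
    refine (integrable_prod_iff' hmeas).mpr ⟨hX.mono fun h hh ↦ ?_, ?_⟩
    · simpa only [Real.exp_sub] using (hh.integrable_exp_mul t).div_const _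
    · refine Integrable.of_bound hmeas.norm.prod_swap.integral_prod_right' 1 ?_
      filter_upwards [hbound] with h hh
      have hnonneg : 0 ≤ ∫ ω, Real.exp (t * X ω h - c * t ^ 2 / 2) ∂μ :=
        integral_nonneg fun _ ↦ Real.exp_nonneg _
      simpa only [Function.comp_apply, Prod.swap_prod_mk, Real.norm_eq_abs, Real.abs_exp,
        abs_of_nonneg hnonneg] using hh
  calc ∫ ω, ∫ h, Real.exp (t * X ω h - c * t ^ 2 / 2) ∂P ∂μ
      = ∫ h, ∫ ω, Real.exp (t * X ω h - c * t ^ 2 / 2) ∂μ ∂P := integral_integral_swap hint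
    _ ≤ ∫ _, (1 : ℝ) ∂P := integral_mono_ae hint.integral_prod_right (integrable_const 1) hbound
    _ = 1 := by simp

variable {D : Measure Z} [IsProbabilityMeasure D]

lemma hasSubgaussianMGF_pi_mean {f : Z → ℝ} (hf : HasSubgaussianMGF f c D) :
    HasSubgaussianMGF (fun zs : ι → Z ↦ (Fintype.card ι : ℝ)⁻¹ * ∑ i, f (zs i))
      (c / Fintype.card ι) (Measure.pi fun _ ↦ D) := by
  have hindep : iIndepFun (fun i (zs : ι → Z) ↦ f (zs i)) (Measure.pi fun _ ↦ D) :=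
    iIndepFun_pi fun _ ↦ hf.aemeasurable
  have heval (i : ι) :
      HasSubgaussianMGF (fun zs : ι → Z ↦ f (zs i)) c (Measure.pi fun _ ↦ D) := by
    have heq := (measurePreserving_eval (fun _ : ι ↦ D) i).map_eq
    exact HasSubgaussianMGF.of_map (measurable_pi_apply i).aemeasurable (heq.symm ▸ hf)
  have hsum := HasSubgaussianMGF.sum_of_iIndepFun hindep (s := Finset.univ) fun i _ ↦ heval i
  have hproxy : (c / Fintype.card ι : ℝ)
      = (Fintype.card ι : ℝ)⁻¹ ^ 2 * (∑ _i : ι, c : ℝ≥0) := by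
    simp only [Finset.sum_const, Finset.card_univ, nsmul_eq_mul, NNReal.coe_mul,
      NNReal.coe_natCast]
    field_simp
  convert hsum.const_mul (Fintype.card ι : ℝ)⁻¹ using 1
  exact NNReal.eq hproxy

lemma hasSubgaussianMGF_sub_integral_of_mem_Icc_zero_one {f : Z → ℝ} (hf : AEMeasurable f D)
    (hf01 : ∀ᵐ z ∂D, f z ∈ Set.Icc (0 : ℝ) 1) :
    HasSubgaussianMGF (fun z ↦ f z - ∫ w, f w ∂D) (1 / 4) D := by
  convert hasSubgaussianMGF_of_mem_Icc hf hf01 using 1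
  norm_num

end Subgaussian

section Risk

variable {H Z ι : Type*} [MeasurableSpace Z] [Fintype ι]

/-- The true risk `R(h)` of the hypothesis `h`: its expected loss under the distribution `D`
(with the junk value `0` when the loss is not `D`-integrable). -/
noncomputable def trueRisk (D : Measure Z) (ℓ : H → Z → ℝ) (h : H) : ℝ := ∫ z, ℓ h z ∂D

/-- The empirical risk of the hypothesis `h`: its average loss on the sample `zs`, which may be
indexed by any finite type (the paper's `R̂_n(h)` is the case `ι = Fin n`). It is `0` on the
empty sample. -/
noncomputable def empiricalRisk (ℓ : H → Z → ℝ) (zs : ι → Z) (h : H) : ℝ :=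
  (Fintype.card ι : ℝ)⁻¹ * ∑ i, ℓ h (zs i)

lemma empiricalRisk_sub_trueRisk [Nonempty ι] (D : Measure Z) (ℓ : H → Z → ℝ) (zs : ι → Z)
    (h : H) :
    empiricalRisk ℓ zs h - trueRisk D ℓ h
      = (Fintype.card ι : ℝ)⁻¹ * ∑ i, (ℓ h (zs i) - trueRisk D ℓ h) := by
  simp [empiricalRisk, mul_sub]

variable [MeasurableSpace H] {ℓ : H → Z → ℝ}

lemma measurable_trueRisk (hℓ : Measurable (Function.uncurry ℓ)) (D : Measure Z) [SFinite D] :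
    Measurable (trueRisk D ℓ) :=
  (hℓ.stronglyMeasurable.integral_prod_right (ν := D)).measurable

lemma measurable_uncurry_empiricalRisk (hℓ : Measurable (Function.uncurry ℓ)) :
    Measurable (Function.uncurry (empiricalRisk ℓ : (ι → Z) → H → ℝ)) := by
  have hloss (i : ι) : Measurable fun p : (ι → Z) × H ↦ ℓ p.2 (p.1 i) :=
    hℓ.comp (measurable_snd.prodMk ((measurable_pi_apply i).comp measurable_fst))
  exact (Finset.measurable_sum _ fun i _ ↦ hloss i).const_mul _

theorem pac_bayes_exp_moment_general [Nonempty ι] (hℓ : Measurable (Function.uncurry ℓ))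
    {P : Measure H} [IsProbabilityMeasure P] {D : Measure Z} [IsProbabilityMeasure D] {c : ℝ≥0}
    (hsub : ∀ᵐ h ∂P, HasSubgaussianMGF (fun z ↦ ℓ h z - trueRisk D ℓ h) c D) (t : ℝ) :
    ∫ zs, ∫ h, Real.exp (t * (empiricalRisk ℓ zs h - trueRisk D ℓ h)
      - c * t ^ 2 / (2 * Fintype.card ι)) ∂P ∂(Measure.pi fun _ : ι ↦ D) ≤ 1 := by
  have hmeas : Measurable (Function.uncurry fun (zs : ι → Z) h ↦
      empiricalRisk ℓ zs h - trueRisk D ℓ h) :=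
    (measurable_uncurry_empiricalRisk hℓ).sub ((measurable_trueRisk hℓ D).comp measurable_snd)
  have hmean : ∀ᵐ h ∂P, HasSubgaussianMGF
      (fun zs : ι → Z ↦ empiricalRisk ℓ zs h - trueRisk D ℓ h) (c / Fintype.card ι)
      (Measure.pi fun _ ↦ D) := by
    simp only [empiricalRisk_sub_trueRisk]
    exact hsub.mono fun _ hh ↦ hasSubgaussianMGF_pi_mean hh
  have hproxy : c * t ^ 2 / (2 * Fintype.card ι)
      = ((c / Fintype.card ι : ℝ≥0) : ℝ) * t ^ 2 / 2 := by
    push_cast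
    ring
  simp only [hproxy]
  exact integral_integral_exp_mul_sub_le_one_of_hasSubgaussianMGF hmeas.aestronglyMeasurable hmean t

end Risk

/-- Exponential moment bound for the PAC-Bayes proof: for losses in `[0,1]`,
any `λ > 0`, prior `P` on `H` and distribution `D` on `Z`,
`E_{Z_n ∼ D^n}[ E_{h∼P}[ exp (λ (R̂_n h − R h) − λ²/(8n)) ] ] ≤ 1`. -/
theorem pac_bayes_exp_moment {H Z : Type*} [MeasurableSpace H] [MeasurableSpace Z]
    (ℓ : H → Z → ℝ) (hℓmeas : Measurable (Function.uncurry ℓ))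
    (hℓbd : ∀ h z, ℓ h z ∈ Set.Icc (0:ℝ) 1)
    (P : Measure H) [IsProbabilityMeasure P]
    (D : Measure Z) [IsProbabilityMeasure D]
    (n : ℕ) (hn : 1 ≤ n) (lam : ℝ) (hlam : 0 < lam) :
    (∫ zs, (∫ h, Real.exp (lam * ((n : ℝ)⁻¹ * ∑ i, ℓ h (zs i) - ∫ z, ℓ h z ∂D)
          - lam ^ 2 / (8 * n)) ∂P) ∂(Measure.pi fun _ : Fin n => D)) ≤ 1 := by
  have : Nonempty (Fin n) := Fin.pos_iff_nonempty.mp hn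
  have hsub (h : H) : HasSubgaussianMGF (fun z ↦ ℓ h z - trueRisk D ℓ h) (1 / 4) D :=
    hasSubgaussianMGF_sub_integral_of_mem_Icc_zero_one hℓmeas.of_uncurry_left.aemeasurable
      (ae_of_all D (hℓbd h))
  have hexponent : lam ^ 2 / (8 * n) = ((1 / 4 : ℝ≥0) : ℝ) * lam ^ 2 / (2 * n) := by
    push_cast
    ring
  simpa only [hexponent, empiricalRisk, trueRisk, Fintype.card_fin] using
    pac_bayes_exp_moment_general (ι := Fin n) hℓmeas (ae_of_all P hsub) lam
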